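/- arXiv:1907.08660 — 5 statements merged into one kernel-verified Lean document; each statement's English description precedes it below -/
import Mathlib

section
/- Let D ⊂ ℝ^d be a bounded measurable set, let 1 ≤ q < ∞, let −∞ = c_0 < c_1 < ⋯ < c_{n−1} < c_n = ∞ be constants and w_1, …, w_n positive constants, and define the level set map 𝒢 from the space of bounded continuous real-valued functions on the closure of D (with the sup norm) to L^q(D) by 𝒢(φ) = Σ_{l=1}^n w_l · 1_{{x ∈ D : c_{l−1} ≤ φ(x) < c_l}}. If φ is a continuous function such that the Lebesgue measure of the level set {x ∈ D : φ(x) = c_l} is zero for every l = 1, …, n−1, then 𝒢 is continuous at φ: for every sequence φ_k converging uniformly to φ on D, 𝒢(φ_k) converges to 𝒢(φ) in L^q(D). -/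
open MeasureTheory Filter Topology

/-- The level set map `𝒢` determined by thresholds
`−∞ = c_0 < c_1 < ⋯ < c_n = ∞` (encoded as `c : Fin (n+1) → EReal`) and weights
`w_1, …, w_n`: `𝒢(φ)(x) = ∑_{l=1}^n w_l · 1_{{x ∈ D : c_{l−1} ≤ φ(x) < c_l}}(x)`. -/
noncomputable def levelSetMap (d n : ℕ) (D : Set (EuclideanSpace ℝ (Fin d)))
    (c : Fin (n + 1) → EReal) (w : Fin n → ℝ)
    (φ : EuclideanSpace ℝ (Fin d) → ℝ) : EuclideanSpace ℝ (Fin d) → ℝ := fun x =>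
  ∑ l : Fin n, w l *
    Set.indicator {y | y ∈ D ∧ c l.castSucc ≤ (φ y : EReal) ∧ (φ y : EReal) < c l.succ}
      (fun _ => (1 : ℝ)) x

/-- The one-dimensional profile of the level set map. -/
noncomputable def levelProfile (n : ℕ) (c : Fin (n + 1) → EReal) (w : Fin n → ℝ) : ℝ → ℝ :=
  fun t => ∑ l : Fin n, w l *
    Set.indicator {s : ℝ | c l.castSucc ≤ (s : EReal) ∧ (s : EReal) < c l.succ}
      (fun _ => (1 : ℝ)) t

lemma levelSetMap_eq_profile (d n : ℕ) (D : Set (EuclideanSpace ℝ (Fin d)))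
    (c : Fin (n + 1) → EReal) (w : Fin n → ℝ) (φ : EuclideanSpace ℝ (Fin d) → ℝ)
    (x : EuclideanSpace ℝ (Fin d)) (hx : x ∈ D) :
    levelSetMap d n D c w φ x = levelProfile n c w (φ x) := by
  unfold levelSetMap levelProfile
  refine Finset.sum_congr rfl fun l _ => ?_
  congr 1
  by_cases h : c l.castSucc ≤ (φ x : EReal) ∧ (φ x : EReal) < c l.succ
  · rw [Set.indicator_of_mem (show x ∈ {y | y ∈ D ∧ c l.castSucc ≤ (φ y : EReal) ∧
        (φ y : EReal) < c l.succ} from ⟨hx, h⟩), Set.indicator_of_mem (show φ x ∈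
        {s : ℝ | c l.castSucc ≤ (s : EReal) ∧ (s : EReal) < c l.succ} from h)]
  · rw [Set.indicator_of_notMem (show x ∉ {y | y ∈ D ∧ c l.castSucc ≤ (φ y : EReal) ∧
        (φ y : EReal) < c l.succ} from fun h' => h h'.2), Set.indicator_of_notMem (show φ x ∉
        {s : ℝ | c l.castSucc ≤ (s : EReal) ∧ (s : EReal) < c l.succ} from h)]

lemma measurable_levelProfile (n : ℕ) (c : Fin (n + 1) → EReal) (w : Fin n → ℝ) :
    Measurable (levelProfile n c w) := by
  unfold levelProfile
  refine Finset.measurable_sum _ fun l _ => Measurable.const_mul ?_ _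
  refine measurable_const.indicator ?_
  exact (measurableSet_le measurable_const measurable_coe_real_ereal).inter
    (measurableSet_lt measurable_coe_real_ereal measurable_const)

lemma abs_levelProfile_le (n : ℕ) (c : Fin (n + 1) → EReal) (w : Fin n → ℝ) (t : ℝ) :
    |levelProfile n c w t| ≤ ∑ l, |w l| := by
  unfold levelProfile
  refine (Finset.abs_sum_le_sum_abs _ _).trans (Finset.sum_le_sum fun l _ => ?_)
  rw [Set.indicator_apply]
  split_ifs <;> simp

lemma levelProfile_eventuallyEq (n : ℕ) (c : Fin (n + 1) → EReal) (w : Fin n → ℝ) (t : ℝ)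
    (ht : ∀ l, (t : EReal) ≠ c l) :
    ∀ᶠ s in 𝓝 t, levelProfile n c w s = levelProfile n c w t := by
  have key : ∀ l, ∀ᶠ s : ℝ in 𝓝 t, ((c l ≤ (s : EReal)) ↔ (c l ≤ (t : EReal))) := by
    intro l
    have hcont : Tendsto (fun s : ℝ => (s : EReal)) (𝓝 t) (𝓝 (t : EReal)) :=
      continuous_coe_real_ereal.tendsto t
    rcases lt_or_gt_of_ne (ht l) with h | h
    · filter_upwards [hcont.eventually (gt_mem_nhds h)] with s hs
      simp [not_le.2 h, not_le.2 hs]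
    · filter_upwards [hcont.eventually (lt_mem_nhds h)] with s hs
      simp [h.le, le_of_lt hs]
  filter_upwards [eventually_all.2 key] with s hs
  simp only [levelProfile, Set.indicator_apply, Set.mem_ofPred_eq, ← not_le, hs]

/-- **Continuity of the level set map at functions with null level sets.**
Let `D ⊂ ℝ^d` be bounded and measurable, `1 ≤ q < ∞`, and let `φ ∈ C(D̄)` be such that
the Lebesgue measure of `{x ∈ D : φ(x) = c_l}` vanishes for every interior threshold
`l = 1, …, n−1`.  Then the level set map `𝒢` is continuous at `φ`: for every sequence
`φ_k` converging uniformly to `φ` on `D` (with each `φ_k ∈ C(D̄)`), `𝒢(φ_k) → 𝒢(φ)`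
in `L^q(D)`. -/
theorem levelSetMap_continuous_of_null_level_sets
    (d n : ℕ) (hn : 0 < n)
    (D : Set (EuclideanSpace ℝ (Fin d)))
    (hD : Bornology.IsBounded D) (hDm : MeasurableSet D)
    (q : ℝ) (hq : 1 ≤ q)
    (c : Fin (n + 1) → EReal) (hc : StrictMono c)
    (hc0 : c 0 = ⊥) (hcn : c (Fin.last n) = ⊤)
    (w : Fin n → ℝ) (hw : ∀ l, 0 < w l)
    (φ : EuclideanSpace ℝ (Fin d) → ℝ)
    (hφc : ContinuousOn φ (closure D))
    (hφb : Bornology.IsBounded (φ '' closure D))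
    (hnull : ∀ l : Fin (n + 1), l ≠ 0 → l ≠ Fin.last n →
      volume {x | x ∈ D ∧ (φ x : EReal) = c l} = 0)
    (φseq : ℕ → EuclideanSpace ℝ (Fin d) → ℝ)
    (hseqc : ∀ k, ContinuousOn (φseq k) (closure D))
    (hseqb : ∀ k, Bornology.IsBounded (φseq k '' closure D))
    (hconv : TendstoUniformlyOn φseq φ atTop D) :
    Tendsto (fun k => eLpNorm
        (fun x => levelSetMap d n D c w (φseq k) x - levelSetMap d n D c w φ x)
        (ENNReal.ofReal q) (volume.restrict D))
      atTop (𝓝 0) := by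
  have hq0 : 0 < q := by linarith
  have hmeas : ∀ ψ : EuclideanSpace ℝ (Fin d) → ℝ, ContinuousOn ψ (closure D) →
      AEMeasurable (fun x => levelProfile n c w (ψ x)) (volume.restrict D) := fun ψ hψ =>
    (measurable_levelProfile n c w).comp_aemeasurable
      ((hψ.mono subset_closure).aemeasurable hDm)
  have hcongr : ∀ k, eLpNorm
        (fun x => levelSetMap d n D c w (φseq k) x - levelSetMap d n D c w φ x)
        (ENNReal.ofReal q) (volume.restrict D) =
      (∫⁻ x in D, ‖levelProfile n c w (φseq k x) - levelProfile n c w (φ x)‖ₑ ^ q) ^ (1 / q) := by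
    intro k
    rw [eLpNorm_eq_lintegral_rpow_enorm_toReal (by simpa using hq0) ENNReal.ofReal_ne_top,
      ENNReal.toReal_ofReal hq0.le]
    congr 1
    refine setLIntegral_congr_fun hDm fun x hx => ?_
    simp only [levelSetMap_eq_profile d n D c w _ x hx]
  simp_rw [hcongr]
  have hae : ∀ᵐ x ∂(volume.restrict D), ∀ l, (φ x : EReal) ≠ c l := by
    rw [ae_all_iff]
    intro l
    by_cases h0 : l = 0
    · subst h0; simp [hc0]
    by_cases h1 : l = Fin.last n
    · subst h1; simp [hcn]
    rw [ae_restrict_iff' hDm, ae_iff]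
    simpa using hnull l h0 h1
  set C : ℝ := ∑ l, |w l| with hC
  have hlim : Tendsto (fun k => ∫⁻ x in D,
      ‖levelProfile n c w (φseq k x) - levelProfile n c w (φ x)‖ₑ ^ q) atTop
      (𝓝 (∫⁻ x in D, 0)) := by
    refine tendsto_lintegral_of_dominated_convergence'
      (fun _ => (ENNReal.ofReal (C + C)) ^ q) ?_ ?_ ?_ ?_
    · intro k
      exact (((hmeas _ (hseqc k)).sub (hmeas _ hφc)).enorm).pow_const q
    · intro k
      refine Eventually.of_forall fun x => ?_
      refine ENNReal.rpow_le_rpow ?_ hq0.le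
      rw [← ofReal_norm_eq_enorm]
      refine ENNReal.ofReal_le_ofReal ((norm_sub_le _ _).trans ?_)
      exact add_le_add (abs_levelProfile_le n c w _) (abs_levelProfile_le n c w _)
    · rw [lintegral_const, Measure.restrict_apply_univ]
      exact ENNReal.mul_ne_top (ENNReal.rpow_ne_top_of_nonneg hq0.le ENNReal.ofReal_ne_top)
        hD.measure_lt_top.ne
    · filter_upwards [hae, ae_restrict_mem hDm] with x hx hxD
      refine tendsto_const_nhds.congr' ?_
      filter_upwards [(hconv.tendsto_at hxD).eventually
        (levelProfile_eventuallyEq n c w (φ x) hx)] with k hk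
      simp [hk, hq0]
  have h2 := hlim.ennrpow_const (1 / q)
  simpa [hq0] using h2
end

section
/- Let D ⊂ ℝ^d be a bounded measurable set, let 1 ≤ q < ∞, let −∞ = c_0 < c_1 < ⋯ < c_{n−1} < c_n = ∞ be constants and w_1, …, w_n positive constants with w_l ≠ w_{l+1} for some l, and define the level set map 𝒢 by 𝒢(φ) = Σ_{l=1}^n w_l · 1_{{x ∈ D : c_{l−1} ≤ φ(x) < c_l}}. If φ is a continuous function such that the Lebesgue measure of the level set {x ∈ D : φ(x) = c_l} is strictly positive for some l ∈ {1, …, n−1} with w_l ≠ w_{l+1}, then 𝒢 is not continuous at φ in the L^q(D) topology: there exists a sequence φ_k converging uniformly to φ such that 𝒢(φ_k) does not converge to 𝒢(φ) in L^q(D). -/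
open MeasureTheory Filter Topology

theorem levelSetMap_eq_aux (d n : ℕ) (D : Set (EuclideanSpace ℝ (Fin d)))
    (c : Fin (n + 1) → EReal) (hc : StrictMono c) (w : Fin n → ℝ)
    (φ : EuclideanSpace ℝ (Fin d) → ℝ) (x : EuclideanSpace ℝ (Fin d)) (hx : x ∈ D) (i : Fin n)
    (h1 : c i.castSucc ≤ (φ x : EReal)) (h2 : (φ x : EReal) < c i.succ) :
    levelSetMap d n D c w φ x = w i := by
  unfold levelSetMap
  rw [Finset.sum_eq_single i]
  · rw [Set.indicator_of_mem (by exact ⟨hx, h1, h2⟩), mul_one]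
  · intro j _ hj
    rw [Set.indicator_of_notMem, mul_zero]
    rintro ⟨_, h3, h4⟩
    have a := hc.lt_iff_lt.1 (h1.trans_lt h4)
    have b := hc.lt_iff_lt.1 (h3.trans_lt h2)
    apply hj
    rw [Fin.lt_def] at a b
    simp at a b
    ext
    omega
  · simp

/-- **Discontinuity of the level set map at functions with a fat level set.**
If the Lebesgue measure of `{x ∈ D : φ(x) = c_l}` is strictly positive for some interior
threshold `l ∈ {1, …, n−1}` with `w_l ≠ w_{l+1}`, then the level set map `𝒢` is not
continuous at `φ` in the `L^q(D)` topology: there is a sequence `φ_k` in `C(D̄)`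
converging uniformly to `φ` such that `𝒢(φ_k)` does not converge to `𝒢(φ)` in `L^q(D)`. -/
theorem levelSetMap_discontinuous_of_fat_level_set
    (d n : ℕ) (hn : 0 < n)
    (D : Set (EuclideanSpace ℝ (Fin d)))
    (hD : Bornology.IsBounded D) (hDm : MeasurableSet D)
    (q : ℝ) (hq : 1 ≤ q)
    (c : Fin (n + 1) → EReal) (hc : StrictMono c)
    (hc0 : c 0 = ⊥) (hcn : c (Fin.last n) = ⊤)
    (w : Fin n → ℝ) (hw : ∀ l, 0 < w l)
    (φ : EuclideanSpace ℝ (Fin d) → ℝ)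
    (hφc : ContinuousOn φ (closure D))
    (hφb : Bornology.IsBounded (φ '' closure D))
    (hfat : ∃ l : ℕ, ∃ h1 : 0 < l, ∃ h2 : l < n,
      0 < volume {x | x ∈ D ∧ (φ x : EReal) = c ⟨l, by omega⟩} ∧
        w ⟨l - 1, by omega⟩ ≠ w ⟨l, h2⟩) :
    ∃ φseq : ℕ → EuclideanSpace ℝ (Fin d) → ℝ,
      (∀ k, ContinuousOn (φseq k) (closure D)) ∧
      (∀ k, Bornology.IsBounded (φseq k '' closure D)) ∧
      TendstoUniformlyOn φseq φ atTop (closure D) ∧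
      ¬ Tendsto (fun k => eLpNorm
          (fun x => levelSetMap d n D c w (φseq k) x - levelSetMap d n D c w φ x)
          (ENNReal.ofReal q) (volume.restrict D))
        atTop (𝓝 0) := by
  obtain ⟨l, h1, h2, hvol, hne⟩ := hfat
  set A : Set (EuclideanSpace ℝ (Fin d)) :=
    {x | x ∈ D ∧ (φ x : EReal) = c ⟨l, by omega⟩} with hA
  obtain ⟨x0, hx0D, hx0⟩ : A.Nonempty := nonempty_of_measure_ne_zero hvol.ne'
  have hlt : c ⟨l - 1, by omega⟩ < (φ x0 : EReal) := by
    rw [hx0]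
    apply hc
    rw [Fin.lt_def]
    simp only
    omega
  obtain ⟨r, hr1, hr2⟩ := EReal.lt_iff_exists_real_btwn.1 hlt
  have hr2' : r < φ x0 := by exact_mod_cast hr2
  set δ : ℝ := φ x0 - r with hδ
  have hδ0 : 0 < δ := sub_pos.2 hr2'
  have hAval : ∀ x ∈ A, φ x = φ x0 := fun x hx => by
    have := hx.2.trans hx0.symm
    exact_mod_cast this
  have hAeq : A = D ∩ (closure D ∩ φ ⁻¹' {φ x0}) := by
    ext x
    constructor
    · intro hx
      exact ⟨hx.1, subset_closure hx.1, hAval x hx⟩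
    · rintro ⟨hx, _, hx2⟩
      refine ⟨hx, ?_⟩
      rw [← hx0]
      exact congrArg _ hx2
  have hAm : MeasurableSet A := by
    rw [hAeq]
    exact hDm.inter
      (hφc.preimage_isClosed_of_isClosed isClosed_closure isClosed_singleton).measurableSet
  have hAD : A ⊆ D := fun x hx => hx.1
  have hε : Tendsto (fun k : ℕ => δ * (1 / ((k : ℝ) + 1))) atTop (𝓝 0) := by
    simpa using (tendsto_one_div_add_atTop_nhds_zero_nat (𝕜 := ℝ)).const_mul δ
  have hεpos : ∀ k : ℕ, 0 < δ * (1 / ((k : ℝ) + 1)) := fun k => by positivity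
  have hεle : ∀ k : ℕ, δ * (1 / ((k : ℝ) + 1)) ≤ δ := fun k => by
    have : 1 / ((k : ℝ) + 1) ≤ 1 := by
      rw [div_le_one (by positivity)]
      have : (0 : ℝ) ≤ k := by positivity
      linarith
    nlinarith
  refine ⟨fun k x => φ x - δ * (1 / ((k : ℝ) + 1)), ?_, ?_, ?_, ?_⟩
  · intro k
    exact hφc.sub continuousOn_const
  · intro k
    obtain ⟨C, hC⟩ := isBounded_iff_forall_norm_le.1 hφb
    refine isBounded_iff_forall_norm_le.2 ⟨C + δ, ?_⟩
    rintro _ ⟨x, hx, rfl⟩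
    have h := hC _ ⟨x, hx, rfl⟩
    rw [Real.norm_eq_abs, abs_le] at h ⊢
    have := hεpos k
    have := hεle k
    constructor <;> linarith
  · rw [Metric.tendstoUniformlyOn_iff]
    intro ε hε0
    filter_upwards [hε.eventually (gt_mem_nhds hε0)] with k hk x _
    rw [Real.dist_eq, sub_sub_cancel, abs_of_pos (hεpos k)]
    exact hk
  · intro hT
    set Δ : ℝ := w ⟨l - 1, by omega⟩ - w ⟨l, h2⟩ with hΔ
    have hq0 : ENNReal.ofReal q ≠ 0 := by
      simp only [ne_eq, ENNReal.ofReal_eq_zero, not_le]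
      linarith
    have hpos : 0 < eLpNorm (fun _ : EuclideanSpace ℝ (Fin d) => Δ) (ENNReal.ofReal q)
        (volume.restrict A) := by
      rw [pos_iff_ne_zero, Ne, eLpNorm_eq_zero_iff aestronglyMeasurable_const hq0]
      intro h
      have hne' : volume.restrict A ≠ 0 := by
        rw [Ne, Measure.restrict_eq_zero]
        exact hvol.ne'
      have : NeZero (volume.restrict A) := ⟨hne'⟩
      obtain ⟨y, hy⟩ := h.exists
      exact sub_ne_zero.2 hne hy
    refine hpos.not_ge (ge_of_tendsto' hT fun k => ?_)
    calc eLpNorm (fun _ : EuclideanSpace ℝ (Fin d) => Δ) (ENNReal.ofReal q)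
          (volume.restrict A)
        = eLpNorm (fun x => levelSetMap d n D c w
            (fun x => φ x - δ * (1 / ((k : ℝ) + 1))) x - levelSetMap d n D c w φ x)
          (ENNReal.ofReal q) (volume.restrict A) := by
          apply eLpNorm_congr_ae
          refine ae_restrict_of_forall_mem hAm fun x hx => ?_
          have hl : (⟨l - 1, by omega⟩ : Fin n).succ = ⟨l, by omega⟩ := by
            ext
            simp only [Fin.succ_mk]
            omega
          have e1 := levelSetMap_eq_aux d n D c hc w φ x hx.1 ⟨l, h2⟩
            (by rw [hx.2]; exact le_refl _)
            (by rw [hx.2]; apply hc; rw [Fin.lt_def]; simp)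
          have e2 := levelSetMap_eq_aux d n D c hc w
            (fun x => φ x - δ * (1 / ((k : ℝ) + 1))) x hx.1 ⟨l - 1, by omega⟩
            (by
              refine hr1.le.trans ?_
              rw [EReal.coe_le_coe_iff, hAval x hx]
              have := hεle k
              linarith)
            (by
              rw [hl, ← hx0, EReal.coe_lt_coe_iff, hAval x hx]
              have := hεpos k
              linarith)
          simp only [e1, e2, hΔ]
      _ ≤ _ := eLpNorm_mono_measure _ (Measure.restrict_mono hAD le_rfl)
end

section
/- Let D ⊂ ℝ^d be a bounded measurable set with Lebesgue measure 𝔪, and let C(D̄) denote the space of bounded continuous real-valued functions on the closure of D with the sup norm. For a fixed constant c ∈ ℝ, define the functional 𝔐_c : C(D̄) → [0, ∞) by 𝔐_c(φ) = 𝔪({x ∈ D : φ(x) = c}). Then 𝔐_c is a Borel measurable function on C(D̄); equivalently, for every t ∈ ℝ, the set {φ ∈ C(D̄) : 𝔐_c(φ) < t} is a Borel subset of C(D̄). -/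
open MeasureTheory

/-- **Borel measurability of the level-set-measure functional.**
On the space `C(D̄)` of bounded continuous real-valued functions on the closure of a
bounded measurable set `D ⊂ ℝ^d` (with the sup norm and its Borel σ-algebra), the
functional `𝔐_c(φ) = 𝔪({x ∈ D : φ(x) = c})` is Borel measurable. -/
theorem level_set_measure_functional_measurable
    (d : ℕ) (D : Set (EuclideanSpace ℝ (Fin d)))
    (hD : Bornology.IsBounded D) (hDm : MeasurableSet D)
    (c : ℝ) :
    @Measurable (BoundedContinuousFunction (closure D) ℝ) ENNReal
      (borel (BoundedContinuousFunction (closure D) ℝ)) inferInstance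
      (fun φ => volume
        (Subtype.val '' {y : closure D | (y : EuclideanSpace ℝ (Fin d)) ∈ D ∧ φ y = c})) := by
  letI : MeasurableSpace (BoundedContinuousFunction (closure D) ℝ) := borel _
  haveI : BorelSpace (BoundedContinuousFunction (closure D) ℝ) := ⟨rfl⟩
  have hcl : MeasurableSet (closure D) := isClosed_closure.measurableSet
  have hemb : MeasurableEmbedding (Subtype.val : closure D → EuclideanSpace ℝ (Fin d)) :=
    MeasurableEmbedding.subtype_coe hcl
  let ν : Measure (closure D) := Measure.comap Subtype.val volume
  haveI : IsFiniteMeasure ν := by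
    refine ⟨?_⟩
    rw [hemb.comap_apply]
    exact lt_of_le_of_lt (measure_mono (by rintro _ ⟨y, -, rfl⟩; exact y.2))
      hD.closure.measure_lt_top
  have hS : MeasurableSet {p : BoundedContinuousFunction (closure D) ℝ × closure D |
      (p.2 : EuclideanSpace ℝ (Fin d)) ∈ D ∧ p.1 p.2 = c} := by
    refine MeasurableSet.inter ((measurable_subtype_coe.comp measurable_snd) hDm) ?_
    have hc : Continuous fun p : BoundedContinuousFunction (closure D) ℝ × closure D =>
      p.1 p.2 := continuous_eval
    exact (isClosed_eq hc continuous_const).measurableSet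
  have h := measurable_measure_prodMk_left (ν := ν) hS
  convert h using 2 with φ
  exact (hemb.comap_apply _ _).symm
end

section
/- Let D ⊂ ℝ^d be a bounded measurable set with Lebesgue measure 𝔪, let θ_1, …, θ_J ∈ ℝ^d, λ_1, …, λ_J > 0, c ∈ ℝ, and let μ_a be the standard Gaussian measure N(0, I) on ℝ^J. Define φ(x, a) = Σ_{s=1}^J a_s · exp(−|x − θ_s|²/(2λ_s²)) and the random level set D_c(a) = {x ∈ D : φ(x, a) = c}. Then ∫_{ℝ^J} 𝔪(D_c(a)) dμ_a(a) = 0, and consequently 𝔪(D_c(a)) = 0 for μ_a-almost every a ∈ ℝ^J. -/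
open MeasureTheory ProbabilityTheory

lemma hyperplane_null (n : ℕ) (w : Fin (n+1) → ℝ) (hw : ∀ s, 0 < w s) (c : ℝ) :
    (Measure.pi fun _ : Fin (n+1) => gaussianReal 0 1) {a | ∑ s, a s * w s = c} = 0 := by
  have hS : MeasurableSet {a : Fin (n+1) → ℝ | ∑ s, a s * w s = c} :=
    measurableSet_eq_fun (by fun_prop) measurable_const
  have : NullSingletonClass (gaussianReal 0 1) := nullSingletonClass_gaussianReal one_ne_zero
  have h := (measurePreserving_piFinSuccAbove (fun _ : Fin (n+1) => gaussianReal 0 1) 0).symm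
  rw [← h.measure_preimage hS.nullMeasurableSet,
    Measure.prod_apply_symm (h.measurable hS), lintegral_eq_zero_iff'
      (measurable_measure_prodMk_right (h.measurable hS)).aemeasurable]
  refine Filter.Eventually.of_forall fun b => ?_
  refine measure_mono_null (t := {(c - ∑ i, b i * w i.succ) / w 0}) ?_ (measure_singleton _)
  intro t ht
  have ht' : t * w 0 + ∑ i, b i * w (Fin.succ i) = c := by
    simpa [Fin.sum_univ_succ, MeasurableEquiv.piFinSuccAbove] using ht
  rw [Set.mem_singleton_iff, eq_div_iff (hw 0).ne']
  linarith

/-- **The random level set has zero Lebesgue measure almost surely (parameter space).**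
With `φ(x, a) = ∑_s a_s · exp(−‖x − θ_s‖²/(2 λ_s²))` and
`D_c(a) = {x ∈ D : φ(x, a) = c}`, the expectation `∫ 𝔪(D_c(a)) dμ_a(a)` vanishes,
and consequently `𝔪(D_c(a)) = 0` for `μ_a`-almost every `a`. -/
theorem random_level_set_null_ae
    (d J : ℕ) (hJ : 0 < J)
    (D : Set (EuclideanSpace ℝ (Fin d)))
    (hD : Bornology.IsBounded D) (hDm : MeasurableSet D)
    (θ : Fin J → EuclideanSpace ℝ (Fin d))
    (lam : Fin J → ℝ) (hlam : ∀ s, 0 < lam s)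
    (c : ℝ)
    (μa : Measure (Fin J → ℝ))
    (hμa : μa = Measure.pi fun _ => gaussianReal 0 1) :
    (∫⁻ a, volume {x | x ∈ D ∧
        ∑ s, a s * Real.exp (-‖x - θ s‖ ^ 2 / (2 * lam s ^ 2)) = c} ∂μa) = 0 ∧
    (∀ᵐ a ∂μa, volume {x | x ∈ D ∧
        ∑ s, a s * Real.exp (-‖x - θ s‖ ^ 2 / (2 * lam s ^ 2)) = c} = 0) := by
  obtain ⟨n, rfl⟩ : ∃ n, J = n + 1 := ⟨J - 1, by omega⟩
  have hS : MeasurableSet {p : (Fin (n+1) → ℝ) × EuclideanSpace ℝ (Fin d) | p.2 ∈ D ∧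
      ∑ s, p.1 s * Real.exp (-‖p.2 - θ s‖ ^ 2 / (2 * lam s ^ 2)) = c} :=
    (measurable_snd hDm).inter (measurableSet_eq_fun (by fun_prop) measurable_const)
  have hm := measurable_measure_prodMk_left (ν := (volume : Measure (EuclideanSpace ℝ (Fin d)))) hS
  have : SFinite μa := by rw [hμa]; infer_instance
  have key : (∫⁻ a, volume {x | x ∈ D ∧
        ∑ s, a s * Real.exp (-‖x - θ s‖ ^ 2 / (2 * lam s ^ 2)) = c} ∂μa) = 0 := by
    have h1 := Measure.prod_apply (μ := μa)
      (ν := (volume : Measure (EuclideanSpace ℝ (Fin d)))) hS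
    rw [Measure.prod_apply_symm hS] at h1
    refine h1.symm.trans ?_
    rw [lintegral_eq_zero_iff' (measurable_measure_prodMk_right hS).aemeasurable]
    refine Filter.Eventually.of_forall fun x => ?_
    subst hμa
    refine measure_mono_null ?_ (hyperplane_null n
      (fun s => Real.exp (-‖x - θ s‖ ^ 2 / (2 * lam s ^ 2))) (fun s => Real.exp_pos _) c)
    intro a ha
    exact ha.2
  exact ⟨key, (lintegral_eq_zero_iff' hm.aemeasurable).1 key⟩
end

section
/- Let D ⊂ ℝ^d be a bounded measurable set with Lebesgue measure 𝔪, let θ_1, …, θ_J ∈ ℝ^d, λ_1, …, λ_J > 0, c ∈ ℝ. Let 𝒯 : ℝ^J → C(D̄) be the map sending a to the function x ↦ Σ_{s=1}^J a_s · exp(−|x − θ_s|²/(2λ_s²)), and let μ_0 be the pushforward under 𝒯 of the standard Gaussian measure N(0, I) on ℝ^J. Then μ_0-almost every φ ∈ C(D̄) satisfies 𝔪({x ∈ D : φ(x) = c}) = 0; that is, μ_0({φ ∈ C(D̄) : 𝔪({x ∈ D : φ(x) = c}) = 0}) = 1. -/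
open MeasureTheory ProbabilityTheory

/-- The parameterization map `𝒯 : ℝ^J → C(D̄)` sending the coefficient vector `a` to the
radial-basis level set function `x ↦ ∑_s a_s · exp(−‖x − θ_s‖²/(2 λ_s²))`, viewed as a
bounded continuous function on the closure of `D`. -/
noncomputable def rbfParamMap (d J : ℕ) (D : Set (EuclideanSpace ℝ (Fin d)))
    (θ : Fin J → EuclideanSpace ℝ (Fin d)) (lam : Fin J → ℝ)
    (a : Fin J → ℝ) : BoundedContinuousFunction (closure D) ℝ where
  toFun := fun y =>
    ∑ s, a s * Real.exp (-‖(y : EuclideanSpace ℝ (Fin d)) - θ s‖ ^ 2 / (2 * lam s ^ 2))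
  continuous_toFun := by fun_prop
  map_bounded' := by
    have key : ∀ z : (closure D : Set (EuclideanSpace ℝ (Fin d))),
        |∑ s, a s * Real.exp (-‖(z : EuclideanSpace ℝ (Fin d)) - θ s‖ ^ 2 / (2 * lam s ^ 2))|
          ≤ ∑ s, |a s| := by
      intro z
      refine (Finset.abs_sum_le_sum_abs _ _).trans (Finset.sum_le_sum fun s _ => ?_)
      rw [abs_mul, abs_of_pos (Real.exp_pos _)]
      have h1 : Real.exp (-‖(z : EuclideanSpace ℝ (Fin d)) - θ s‖ ^ 2 / (2 * lam s ^ 2)) ≤ 1 := by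
        apply Real.exp_le_one_iff.mpr
        apply div_nonpos_of_nonpos_of_nonneg
        · simp only [neg_nonpos]
          positivity
        · positivity
      calc |a s| * Real.exp _ ≤ |a s| * 1 := by
            exact mul_le_mul_of_nonneg_left h1 (abs_nonneg _)
        _ = |a s| := mul_one _
    refine ⟨2 * ∑ s, |a s|, fun x y => ?_⟩
    calc dist _ _ ≤ dist (∑ s, a s * Real.exp
            (-‖(x : EuclideanSpace ℝ (Fin d)) - θ s‖ ^ 2 / (2 * lam s ^ 2))) 0
          + dist 0 (∑ s, a s * Real.exp
            (-‖(y : EuclideanSpace ℝ (Fin d)) - θ s‖ ^ 2 / (2 * lam s ^ 2))) :=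
        dist_triangle _ _ _
      _ ≤ (∑ s, |a s|) + ∑ s, |a s| := by
          rw [dist_zero_right, dist_comm, dist_zero_right]
          exact add_le_add (key x) (key y)
      _ = 2 * ∑ s, |a s| := by ring

theorem rbf_hyperplane_ae (J : ℕ) (hJ : 0 < J) (p : Fin J → ℝ) (hp : ∀ s, 0 < p s) (c : ℝ) :
    ∀ᵐ a ∂(Measure.pi fun _ : Fin J => gaussianReal 0 1), ∑ s, a s * p s ≠ c := by
  obtain ⟨n, rfl⟩ : ∃ n, J = n + 1 := ⟨J - 1, by omega⟩
  have hmp := (measurePreserving_piFinSuccAbove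
    (fun _ : Fin (n + 1) => gaussianReal 0 1) 0)
  have key : ∀ᵐ z ∂((gaussianReal 0 1).prod (Measure.pi fun _ : Fin n => gaussianReal 0 1)),
      z.1 * p 0 + ∑ s : Fin n, z.2 s * p s.succ ≠ c := by
    have hm : MeasurableSet {z : ℝ × (Fin n → ℝ) |
        z.1 * p 0 + ∑ s : Fin n, z.2 s * p s.succ ≠ c} := by
      apply IsOpen.measurableSet
      exact isOpen_ne_fun (by fun_prop) (by fun_prop)
    rw [Measure.ae_prod_iff_ae_ae hm, Measure.ae_ae_comm hm]
    refine Filter.Eventually.of_forall fun b => ?_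
    have : NullSingletonClass (gaussianReal 0 1) := nullSingletonClass_gaussianReal one_ne_zero
    have h0 : ∀ᵐ t ∂(gaussianReal 0 1), t ≠ (c - ∑ s : Fin n, b s * p s.succ) / p 0 :=
      Measure.ae_ne _ _
    filter_upwards [h0] with t ht h
    apply ht
    rw [eq_div_iff (hp 0).ne']
    linarith
  have := hmp.quasiMeasurePreserving.ae key
  filter_upwards [this] with a ha
  rw [Fin.sum_univ_succ]
  exact ha

theorem rbfParamMap_continuous (d J : ℕ) (D : Set (EuclideanSpace ℝ (Fin d)))
    (θ : Fin J → EuclideanSpace ℝ (Fin d)) (lam : Fin J → ℝ) :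
    Continuous (rbfParamMap d J D θ lam) := by
  have : rbfParamMap d J D θ lam =
      fun a => ∑ s, a s • rbfParamMap d J D θ lam (Pi.single s 1) := by
    funext a
    ext y
    rw [BoundedContinuousFunction.coe_sum, Finset.sum_apply]
    simp [rbfParamMap, Pi.single_apply]
  rw [this]
  fun_prop

/-- **The pushforward prior puts full mass on level set functions with null `c`-level set.**
Let `μ₀` be the pushforward under `𝒯` of the standard Gaussian `N(0, I)` on `ℝ^J`.
Then `μ₀`-almost every `φ ∈ C(D̄)` satisfies `𝔪({x ∈ D : φ(x) = c}) = 0`. -/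
theorem pushforward_rbf_level_set_null
    (d J : ℕ) (hJ : 0 < J)
    (D : Set (EuclideanSpace ℝ (Fin d)))
    (hD : Bornology.IsBounded D) (hDm : MeasurableSet D)
    (θ : Fin J → EuclideanSpace ℝ (Fin d))
    (lam : Fin J → ℝ) (hlam : ∀ s, 0 < lam s)
    (c : ℝ) :
    letI : MeasurableSpace (BoundedContinuousFunction (closure D) ℝ) :=
      borel (BoundedContinuousFunction (closure D) ℝ)
    Measure.map (rbfParamMap d J D θ lam) (Measure.pi fun _ => gaussianReal 0 1)
      {φ : BoundedContinuousFunction (closure D) ℝ |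
        volume (Subtype.val ''
          {y : closure D | (y : EuclideanSpace ℝ (Fin d)) ∈ D ∧ φ y = c}) = 0} = 1 := by
  letI : MeasurableSpace (BoundedContinuousFunction (closure D) ℝ) :=
    borel (BoundedContinuousFunction (closure D) ℝ)
  haveI : BorelSpace (BoundedContinuousFunction (closure D) ℝ) := ⟨rfl⟩
  have hT : Measurable (rbfParamMap d J D θ lam) :=
    (rbfParamMap_continuous d J D θ lam).measurable
  have hprob : IsProbabilityMeasure (Measure.map (rbfParamMap d J D θ lam)
      (Measure.pi fun _ => gaussianReal 0 1)) :=
    Measure.isProbabilityMeasure_map hT.aemeasurable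
  refine le_antisymm prob_le_one ?_
  refine le_trans (le_of_eq ?_) (Measure.le_map_apply hT.aemeasurable _)
  symm
  have hae : ∀ᵐ a ∂(Measure.pi fun _ : Fin J => gaussianReal 0 1),
      ∀ᵐ x : EuclideanSpace ℝ (Fin d),
        ∑ s, a s * Real.exp (-‖x - θ s‖ ^ 2 / (2 * lam s ^ 2)) ≠ c := by
    have hm : MeasurableSet {z : (Fin J → ℝ) × EuclideanSpace ℝ (Fin d) |
        ∑ s, z.1 s * Real.exp (-‖z.2 - θ s‖ ^ 2 / (2 * lam s ^ 2)) ≠ c} := by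
      apply IsOpen.measurableSet
      exact isOpen_ne_fun (by fun_prop) (by fun_prop)
    rw [Measure.ae_ae_comm hm]
    exact Filter.Eventually.of_forall fun x =>
      rbf_hyperplane_ae J hJ _ (fun s => Real.exp_pos _) c
  refine (measure_eq_measure_of_null_sdiff (Set.subset_univ _) ?_).trans measure_univ
  rw [← Set.compl_eq_univ_sdiff]
  filter_upwards [hae] with a ha
  refine measure_mono_null ?_ ha
  rintro _ ⟨y, ⟨_, hy⟩, rfl⟩
  simp only [Set.mem_compl_iff, Set.mem_ofPred_eq, not_not]
  exact hy
end
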